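/- Let P be a set of 2n points in general position, n ≥ 2, and let 1 ≤ r ≤ n−1. Suppose each point of P is incident with exactly one halving line and exactly two k-halving lines for every k = 1, ..., r. Then the edges of the complete geometric graph on P can be partitioned into n plane spanning symmetric caterpillars that are pairwise isomorphic as abstract graphs. -/

import Mathlib

namespace Halving

/-- Signed side of `p` with respect to the oriented line through `u`, `v`. -/
def sideVal (u v p : ℝ × ℝ) : ℝ :=
  (v.1 - u.1) * (p.2 - u.2) - (v.2 - u.2) * (p.1 - u.1)

/-- General position: no three distinct points of `P` are collinear. -/
def GenPos (P : Finset (ℝ × ℝ)) : Prop :=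
  ∀ p ∈ P, ∀ q ∈ P, ∀ r ∈ P, p ≠ q → p ≠ r → q ≠ r →
    ¬ Collinear ℝ ({p, q, r} : Set (ℝ × ℝ))

/-- Points of `P` strictly on the negative side of the line through `u`, `v`. -/
noncomputable def negSide (P : Finset (ℝ × ℝ)) (u v : ℝ × ℝ) : Finset (ℝ × ℝ) :=
  P.filter (fun p => sideVal u v p < 0)

/-- Points of `P` strictly on the positive side of the line through `u`, `v`. -/
noncomputable def posSide (P : Finset (ℝ × ℝ)) (u v : ℝ × ℝ) : Finset (ℝ × ℝ) :=
  P.filter (fun p => 0 < sideVal u v p)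

/-- A `k`-halving line of a set `P` of `2m` points: a line through two points `u ≠ v` of `P`
splitting the remaining points into parts of sizes `m-1-k` and `m-1+k`.  `k = 0` is a
halving line. -/
def IsKHalving (P : Finset (ℝ × ℝ)) (m k : ℕ) (u v : ℝ × ℝ) : Prop :=
  u ∈ P ∧ v ∈ P ∧ u ≠ v ∧
  min (negSide P u v).card (posSide P u v).card = m - 1 - k ∧
  max (negSide P u v).card (posSide P u v).card = m - 1 + k

/-- A halving line. -/
abbrev IsHalving (P : Finset (ℝ × ℝ)) (m : ℕ) (u v : ℝ × ℝ) : Prop := IsKHalving P m 0 u v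

/-- Non-crossing geometric graph on points of the plane. -/
def NonCrossingG (G : SimpleGraph (ℝ × ℝ)) : Prop :=
  ∀ a b c d : ℝ × ℝ, G.Adj a b → G.Adj c d → s(a,b) ≠ s(c,d) →
    Disjoint (openSegment ℝ a b) (openSegment ℝ c d)

/-- A plane spanning tree of a finite point set `P`: all edges join points of `P`,
the graph induced on `P` is a tree, and no two edges cross. -/
def PlaneSpanningTreeOn (P : Finset (ℝ × ℝ)) (G : SimpleGraph (ℝ × ℝ)) : Prop :=
  (∀ a b, G.Adj a b → a ∈ P ∧ b ∈ P) ∧ (G.induce (↑P : Set (ℝ × ℝ))).IsTree ∧ NonCrossingG G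

/-- Partition of the edge set of the complete geometric graph on `P`. -/
def IsGeomPartition (P : Finset (ℝ × ℝ)) {n : ℕ} (T : Fin n → SimpleGraph (ℝ × ℝ)) : Prop :=
  ∀ a b : ℝ × ℝ, a ∈ P → b ∈ P → a ≠ b → ∃! i : Fin n, (T i).Adj a b

/-- The number of halving lines of `P` (as unordered pairs of points). -/
noncomputable def halvingCount (P : Finset (ℝ × ℝ)) (m : ℕ) : ℕ :=
  Set.ncard {e : Sym2 (ℝ × ℝ) | ∃ u v, e = s(u,v) ∧ IsHalving P m u v}

/-- An `h`-labeling: a bijective labeling `v_0, …, v_{2n-1}` of `P` such that for every `i`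
the line through `v_i` and `v_{i+n}` is a halving line. -/
def IsHLabeling (P : Finset (ℝ × ℝ)) (n : ℕ) (v : Fin (2*n) → ℝ × ℝ) : Prop :=
  Function.Injective v ∧ Set.range v = (↑P : Set (ℝ × ℝ)) ∧
  ∀ i : Fin (2*n), IsHalving P n (v i) (v (i + ⟨n % (2*n), Nat.mod_lt _ i.pos⟩))

/-- Convex position: every point of `P` is outside the convex hull of the others. -/
def ConvexPos (P : Finset (ℝ × ℝ)) : Prop :=
  ∀ p ∈ P, p ∉ convexHull ℝ (↑(P.erase p) : Set (ℝ × ℝ))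

end Halving
namespace GraphDefs

/-- Degree of a vertex, via `Set.ncard` (no decidability assumptions). -/
noncomputable def gdeg {V : Type*} (G : SimpleGraph V) (v : V) : ℕ := (G.neighborSet v).ncard

/-- A caterpillar: a tree having a path which contains all vertices of degree `≥ 2`
(equivalently, removing all leaves yields a path). -/
def IsCaterpillar {V : Type*} (G : SimpleGraph V) : Prop :=
  G.IsTree ∧ ∃ (u v : V) (p : G.Walk u v), p.IsPath ∧ ∀ w, 2 ≤ gdeg G w → w ∈ p.support

/-- The graph obtained from `T` by deleting the edges of the path `u1 u2 u3 u4`. -/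
def delP4 {V : Type*} (T : SimpleGraph V) (u1 u2 u3 u4 : V) : SimpleGraph V :=
  T.deleteEdges {s(u1,u2), s(u2,u3), s(u3,u4)}

/-- Witness for `P_4`-symmetry: in `T` minus the path edges, `u1` and `ua` are isolated,
the components of `u3` and `ub` are nontrivial, distinct, cover everything else, and there is
a graph isomorphism between them sending `u3` to `ub`. -/
def P4SymWitness {V : Type*} (T : SimpleGraph V) (u1 u2 u3 u4 ua ub : V) : Prop :=
  (∀ w, ¬ (delP4 T u1 u2 u3 u4).Adj u1 w) ∧
  (∀ w, ¬ (delP4 T u1 u2 u3 u4).Adj ua w) ∧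
  (∃ w, (delP4 T u1 u2 u3 u4).Adj u3 w) ∧
  (∃ w, (delP4 T u1 u2 u3 u4).Adj ub w) ∧
  (delP4 T u1 u2 u3 u4).connectedComponentMk u3 ≠ (delP4 T u1 u2 u3 u4).connectedComponentMk ub ∧
  (∀ v : V, v = u1 ∨ v = ua ∨
      v ∈ ((delP4 T u1 u2 u3 u4).connectedComponentMk u3).supp ∨
      v ∈ ((delP4 T u1 u2 u3 u4).connectedComponentMk ub).supp) ∧
  ∃ φ : ((delP4 T u1 u2 u3 u4).induce ((delP4 T u1 u2 u3 u4).connectedComponentMk u3).supp) ≃g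
        ((delP4 T u1 u2 u3 u4).induce ((delP4 T u1 u2 u3 u4).connectedComponentMk ub).supp),
    (φ ⟨u3, rfl⟩).1 = ub

/-- A `P_4`-symmetric tree, recording the 4-path: the case `i = 4` (Type-1) uses
isolated vertices `u1, u4` and components of `u3, u2`; the case `i = 2` (Type-2) uses
isolated vertices `u1, u2` and components of `u3, u4`. -/
def IsP4SymmetricVia {V : Type*} (T : SimpleGraph V) (u1 u2 u3 u4 : V) : Prop :=
  u1 ≠ u2 ∧ u1 ≠ u3 ∧ u1 ≠ u4 ∧ u2 ≠ u3 ∧ u2 ≠ u4 ∧ u3 ≠ u4 ∧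
  T.Adj u1 u2 ∧ T.Adj u2 u3 ∧ T.Adj u3 u4 ∧
  (P4SymWitness T u1 u2 u3 u4 u4 u2 ∨ P4SymWitness T u1 u2 u3 u4 u2 u4)

/-- A `w`-caterpillar: a `P_4`-symmetric tree `T` such that `T` or `T - u1` is a caterpillar. -/
def IsWCaterpillar {V : Type*} (T : SimpleGraph V) : Prop :=
  T.IsTree ∧ ∃ u1 u2 u3 u4 : V, IsP4SymmetricVia T u1 u2 u3 u4 ∧
    (IsCaterpillar T ∨ IsCaterpillar (T.induce {v | v ≠ u1}))

/-- A double star: a tree with two adjacent vertices `v, w` such that every other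
vertex is a leaf adjacent to `v` or `w`. -/
def IsDoubleStar {V : Type*} (G : SimpleGraph V) : Prop :=
  G.IsTree ∧ ∃ v w : V, v ≠ w ∧ G.Adj v w ∧
    ∀ u, u ≠ v → u ≠ w → gdeg G u = 1 ∧ (G.Adj v u ∨ G.Adj w u)

/-- A symmetric tree: an edge `vw` such that the two components of `T - vw` admit a
graph isomorphism mapping `v` to `w`. -/
def IsSymmetricTree {V : Type*} (T : SimpleGraph V) : Prop :=
  T.IsTree ∧ ∃ v w : V, T.Adj v w ∧
    ∃ φ : ((T.deleteEdges {s(v,w)}).induce ((T.deleteEdges {s(v,w)}).connectedComponentMk v).supp) ≃g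
          ((T.deleteEdges {s(v,w)}).induce ((T.deleteEdges {s(v,w)}).connectedComponentMk w).supp),
      (φ ⟨v, rfl⟩).1 = w

/-- `S_2(m, m)`: the double star `S(m,m)` with its central edge subdivided by two
degree-2 vertices: centers `v, w` of degree `m+1`, subdivision path `v c1 c2 w`,
and all other vertices are leaves adjacent to `v` or `w`. -/
def IsS2DoubleStar {V : Type*} (G : SimpleGraph V) (m : ℕ) : Prop :=
  G.IsTree ∧ ∃ v c1 c2 w : V,
    v ≠ c1 ∧ v ≠ c2 ∧ v ≠ w ∧ c1 ≠ c2 ∧ c1 ≠ w ∧ c2 ≠ w ∧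
    G.Adj v c1 ∧ G.Adj c1 c2 ∧ G.Adj c2 w ∧
    gdeg G v = m + 1 ∧ gdeg G w = m + 1 ∧ gdeg G c1 = 2 ∧ gdeg G c2 = 2 ∧
    ∀ u, u ≠ v → u ≠ c1 → u ≠ c2 → u ≠ w → gdeg G u = 1 ∧ (G.Adj v u ∨ G.Adj w u)

end GraphDefs

/-!
The trees are double stars whose central edges are the halving edges `p (f p)`.  Put the edge `p q`
into the star centred at `p` when `q` lies to the left of the directed line from `p` to `f p`.
This is a partition because of a rotation argument: if the line through `p` in some direction has at
least `n` points on its right, then rotating it about `p` meets a halving line whose other point is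
on the right.  Applied to the parallel of a halving edge `a a'` through a point `p` on its left,
it says that `f p` is closer to that edge than `p` is, so `p - f p` points to the side of `a a'`
on which `p` lies.  The cross product of `a - f a` and `p - f p` being antisymmetric,
`p` is to the left of `a (f a)` if and only if `a` is to the right of `p (f p)`.
-/

open scoped Finset

namespace GraphDefs

section General

variable {V W : Type*} {G : SimpleGraph V} {H : SimpleGraph W}

lemma gdeg_iso (e : G ≃g H) (v : V) : gdeg H (e v) = gdeg G v := by
  have h : H.neighborSet (e v) = e '' G.neighborSet v := by
    ext w
    obtain ⟨u, rfl⟩ := e.surjective w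
    simp [e.map_adj_iff]
  rw [gdeg, gdeg, h, Set.ncard_image_of_injective _ e.injective]

lemma IsDoubleStar.of_iso (e : G ≃g H) (hG : IsDoubleStar G) : IsDoubleStar H := by
  obtain ⟨htree, v, w, hvw, hadj, hleaf⟩ := hG
  refine ⟨e.isTree_iff.1 htree, e v, e w, e.injective.ne hvw, e.map_adj_iff.2 hadj,
    fun x hv hw => ?_⟩
  obtain ⟨u, rfl⟩ := e.surjective x
  simpa only [gdeg_iso, e.map_adj_iff] using
    hleaf u (fun h => hv (h ▸ rfl)) (fun h => hw (h ▸ rfl))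

lemma IsDoubleStar.isCaterpillar (hG : IsDoubleStar G) : IsCaterpillar G := by
  obtain ⟨htree, v, w, -, hadj, hleaf⟩ := hG
  refine ⟨htree, v, w, hadj.toWalk, SimpleGraph.Walk.IsPath.of_adj hadj, fun x hx => ?_⟩
  by_contra hsupp
  obtain ⟨hv, hw⟩ : x ≠ v ∧ x ≠ w := by simpa using hsupp
  have := (hleaf x hv hw).1
  omega

lemma isSymmetricTree_of_swap (htree : G.IsTree) (σ : G ≃g G) {v w : V} (hadj : G.Adj v w)
    (hv : σ v = w) (hw : σ w = v) : IsSymmetricTree G := by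
  have hedge (x y : V) : s(σ x, σ y) = s(v, w) ↔ s(x, y) = s(v, w) := by
    rw [← Sym2.map_mk, show s(v, w) = Sym2.map σ s(v, w) by simp [hv, hw, Sym2.eq_swap],
      (Sym2.map.injective σ.injective).eq_iff]
    simp [hv, hw, Sym2.eq_swap]
  let τ : G.deleteEdges {s(v, w)} ≃g G.deleteEdges {s(v, w)} :=
    { toEquiv := σ.toEquiv
      map_rel_iff' := fun {x y} => by
        change (G.deleteEdges _).Adj (σ x) (σ y) ↔ (G.deleteEdges _).Adj x y
        simp only [SimpleGraph.deleteEdges_adj, Set.mem_singleton_iff, σ.map_adj_iff, hedge] }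
  have hsupp (x : V) : x ∈ ((G.deleteEdges {s(v, w)}).connectedComponentMk v).supp ↔
      τ x ∈ ((G.deleteEdges {s(v, w)}).connectedComponentMk w).supp := by
    simp only [SimpleGraph.ConnectedComponent.mem_supp_iff, SimpleGraph.ConnectedComponent.eq]
    have hreach := SimpleGraph.Iso.reachable_iff (φ := τ) (u := x) (v := v)
    rw [show τ v = w from hv] at hreach
    exact hreach.symm
  exact ⟨htree, v, w, hadj,
    { toEquiv := τ.toEquiv.subtypeEquiv hsupp, map_rel_iff' := τ.map_rel_iff' }, hv⟩

lemma isTree_of_connected_of_parent [Finite V] (hconn : G.Connected) (root : V) (parent : V → V)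
    (hparent : ∀ x y, G.Adj x y → x ≠ root ∧ parent x = y ∨ y ≠ root ∧ parent y = x) :
    G.IsTree := by
  have hsub : G.edgeSet ⊆ (fun x => s(x, parent x)) '' {root}ᶜ := by
    intro e he
    induction e with
    | h x y =>
      rcases hparent x y he with ⟨hx, rfl⟩ | ⟨hy, rfl⟩
      · exact ⟨x, hx, rfl⟩
      · exact ⟨y, hy, Sym2.eq_swap⟩
  have hle : G.edgeSet.ncard ≤ ({root}ᶜ : Set V).ncard :=
    (Set.ncard_le_ncard hsub).trans Set.ncard_image_le
  have hcard : ({root} : Set V).ncard + ({root}ᶜ : Set V).ncard = Nat.card V :=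
    Set.ncard_add_ncard_compl _
  have hge := hconn.card_vert_le_card_edgeSet_add_one
  rw [Set.ncard_singleton] at hcard
  rw [Nat.card_coe_set_eq] at hge
  rw [SimpleGraph.isTree_iff_connected_and_card, Nat.card_coe_set_eq]
  exact ⟨hconn, by omega⟩

end General

section DoubleStar

variable {V α : Type*}

/-- The balanced double star with leaves `α` at each centre, the common abstract isomorphism type
of the trees of the partition.  The centres are the vertices `(b, none)`, and `(b, some i)` is a
leaf at `(b, none)`. -/
def doubleStar (α : Type*) : SimpleGraph (Bool × Option α) where
  Adj
    | (b, none), (c, none) => b ≠ c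
    | (b, none), (c, some _) => b = c
    | (b, some _), (c, none) => b = c
    | (_, some _), (_, some _) => False
  symm := ⟨by rintro ⟨b, _ | i⟩ ⟨c, _ | j⟩ h <;> first | exact h.symm | exact h⟩
  loopless := ⟨by rintro ⟨b, _ | i⟩ h <;> first | exact h rfl | exact h⟩

@[simp] lemma doubleStar_adj_center_center {b c : Bool} :
    (doubleStar α).Adj (b, none) (c, none) ↔ b ≠ c := Iff.rfl

@[simp] lemma doubleStar_adj_center_leaf {b c : Bool} {i : α} :
    (doubleStar α).Adj (b, none) (c, some i) ↔ b = c := Iff.rfl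

@[simp] lemma doubleStar_adj_leaf_center {b c : Bool} {i : α} :
    (doubleStar α).Adj (b, some i) (c, none) ↔ b = c := Iff.rfl

@[simp] lemma not_doubleStar_adj_leaf_leaf {b c : Bool} {i j : α} :
    ¬ (doubleStar α).Adj (b, some i) (c, some j) := id

lemma doubleStar_connected : (doubleStar α).Connected := by
  rw [SimpleGraph.connected_iff_exists_forall_reachable]
  have hcenter (b : Bool) : (doubleStar α).Reachable (false, none) (b, none) := by
    cases b
    · rfl
    · exact SimpleGraph.Adj.reachable (by simp)
  refine ⟨(false, none), ?_⟩
  rintro ⟨b, _ | i⟩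
  · exact hcenter b
  · exact (hcenter b).trans (SimpleGraph.Adj.reachable (by simp))

lemma doubleStar_isTree [Finite α] : (doubleStar α).IsTree := by
  refine isTree_of_connected_of_parent doubleStar_connected (false, none)
    (fun x => (x.1 && x.2.isSome, none)) ?_
  rintro ⟨_ | _, _ | i⟩ ⟨_ | _, _ | j⟩ <;> simp

lemma isDoubleStar_doubleStar [Finite α] : IsDoubleStar (doubleStar α) := by
  refine ⟨doubleStar_isTree, (false, none), (true, none), by simp, by simp, ?_⟩
  rintro ⟨b, _ | i⟩ hfalse htrue
  · cases b <;> contradiction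
  · have hnbr : (doubleStar α).neighborSet (b, some i) = {(b, none)} := by
      ext ⟨c, _ | j⟩ <;> simp [eq_comm]
    refine ⟨by rw [gdeg, hnbr, Set.ncard_singleton], ?_⟩
    cases b <;> simp

/-- The automorphism of the double star exchanging its two halves, which makes it symmetric. -/
def doubleStarSwap (α : Type*) : doubleStar α ≃g doubleStar α where
  toEquiv := Equiv.boolNot.prodCongr (Equiv.refl _)
  map_rel_iff' := by rintro ⟨b, _ | i⟩ ⟨c, _ | j⟩ <;> simp

lemma isSymmetricTree_of_doubleStar_iso [Finite α] {G : SimpleGraph V} (e : doubleStar α ≃g G) :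
    IsSymmetricTree G :=
  isSymmetricTree_of_swap (e.isTree_iff.1 doubleStar_isTree)
    ((e.symm.trans (doubleStarSwap α)).trans e)
    (e.map_adj_iff.2 (doubleStar_adj_center_center.2 Bool.false_ne_true))
    (by simp [doubleStarSwap]) (by simp [doubleStarSwap])

/-- The map from the vertices of `doubleStar α` given by the images of the centres and of the
leaves. -/
def doubleStarMap (center : Bool → V) (leaf : Bool → α → V) : Bool × Option α → V
  | (b, none) => center b
  | (b, some i) => leaf b i

variable {center : Bool → V} {leaf : Bool → α → V}

lemma doubleStarMap_injective (hcenter : center false ≠ center true)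
    (hleaf : ∀ b, Function.Injective (leaf b)) (hleaves : ∀ i j, leaf false i ≠ leaf true j)
    (hcl : ∀ b c i, center b ≠ leaf c i) : Function.Injective (doubleStarMap center leaf) := by
  rintro ⟨b, _ | i⟩ ⟨c, _ | j⟩ h <;> simp only [doubleStarMap] at h
  · cases b <;> cases c <;> first | rfl | exact absurd h hcenter | exact absurd h.symm hcenter
  · exact absurd h (hcl b c j)
  · exact absurd h.symm (hcl c b i)
  · cases b <;> cases c
    · rw [hleaf _ h]
    · exact absurd h (hleaves i j)
    · exact absurd h.symm (hleaves j i)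
    · rw [hleaf _ h]

lemma doubleStarMap_bijective [Fintype V] [Fintype α] (hcenter : center false ≠ center true)
    (hleaf : ∀ b, Function.Injective (leaf b)) (hleaves : ∀ i j, leaf false i ≠ leaf true j)
    (hcl : ∀ b c i, center b ≠ leaf c i) (hcard : Fintype.card V = 2 * (Fintype.card α + 1)) :
    Function.Bijective (doubleStarMap center leaf) := by
  refine (Fintype.bijective_iff_injective_and_card _).2
    ⟨doubleStarMap_injective hcenter hleaf hleaves hcl, ?_⟩
  rw [Fintype.card_prod, Fintype.card_bool, Fintype.card_option, hcard]

lemma nonempty_doubleStar_iso {G : SimpleGraph V}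
    (hbij : Function.Bijective (doubleStarMap center leaf))
    (hcenter : G.Adj (center false) (center true))
    (hcl : ∀ b c i, G.Adj (center b) (leaf c i) ↔ b = c)
    (hleaf : ∀ b c i j, ¬ G.Adj (leaf b i) (leaf c j)) : Nonempty (doubleStar α ≃g G) := by
  refine ⟨{ toEquiv := Equiv.ofBijective _ hbij, map_rel_iff' := ?_ }⟩
  rintro ⟨b, _ | i⟩ ⟨c, _ | j⟩ <;>
    simp only [Equiv.ofBijective_apply, doubleStarMap, doubleStar_adj_center_center,
      doubleStar_adj_center_leaf, doubleStar_adj_leaf_center, not_doubleStar_adj_leaf_leaf,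
      hcl, hleaf]
  · cases b <;> cases c <;> simp [hcenter, hcenter.symm]
  · rw [G.adj_comm, hcl, eq_comm]

end DoubleStar

end GraphDefs

namespace Halving

open GraphDefs

section Sides

variable {P : Finset (ℝ × ℝ)} {n : ℕ} {u v p : ℝ × ℝ}

@[simp] lemma sideVal_left (u v : ℝ × ℝ) : sideVal u v u = 0 := by simp [sideVal]

@[simp] lemma sideVal_right (u v : ℝ × ℝ) : sideVal u v v = 0 := by simp [sideVal, mul_comm]

lemma sideVal_swap (u v p : ℝ × ℝ) : sideVal v u p = -sideVal u v p := by
  simp only [sideVal]; ring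

lemma sideVal_swap_right (u v p : ℝ × ℝ) : sideVal u p v = -sideVal u v p := by
  simp only [sideVal]; ring

lemma sideVal_add_smul (u v x y : ℝ × ℝ) {s t : ℝ} (hst : s + t = 1) :
    sideVal u v (s • x + t • y) = s * sideVal u v x + t * sideVal u v y := by
  obtain rfl : s = 1 - t := by linarith
  simp only [sideVal, Prod.fst_add, Prod.snd_add, Prod.smul_fst, Prod.smul_snd, smul_eq_mul]
  ring

lemma collinear_of_sideVal_eq_zero (huv : u ≠ v) (h : sideVal u v p = 0) :
    Collinear ℝ {u, v, p} := by
  have hpos : (v.1 - u.1) ^ 2 + (v.2 - u.2) ^ 2 ≠ 0 := fun h0 => huv <| Prod.ext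
    (by nlinarith [sq_nonneg (v.1 - u.1), sq_nonneg (v.2 - u.2)])
    (by nlinarith [sq_nonneg (v.1 - u.1), sq_nonneg (v.2 - u.2)])
  have hp : p = (((p.1 - u.1) * (v.1 - u.1) + (p.2 - u.2) * (v.2 - u.2)) /
      ((v.1 - u.1) ^ 2 + (v.2 - u.2) ^ 2)) • (v - u) + u := by
    simp only [sideVal] at h
    ext
    · simp only [Prod.fst_add, Prod.smul_fst, Prod.fst_sub, smul_eq_mul]
      field_simp
      linear_combination (-(v.2 - u.2)) * h
    · simp only [Prod.snd_add, Prod.smul_snd, Prod.snd_sub, smul_eq_mul]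
      field_simp
      linear_combination (v.1 - u.1) * h
  rw [collinear_iff_of_mem (p₀ := u) (by simp)]
  refine ⟨v - u, ?_⟩
  rintro x (rfl | rfl | rfl)
  · exact ⟨0, by simp⟩
  · exact ⟨1, by simp⟩
  · exact ⟨_, hp⟩

lemma GenPos.sideVal_ne_zero (hgp : GenPos P) (hu : u ∈ P) (hv : v ∈ P) (hp : p ∈ P)
    (huv : u ≠ v) (hup : u ≠ p) (hvp : v ≠ p) : sideVal u v p ≠ 0 :=
  fun h => hgp u hu v hv p hp huv hup hvp (collinear_of_sideVal_eq_zero huv h)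

lemma mem_negSide : p ∈ negSide P u v ↔ p ∈ P ∧ sideVal u v p < 0 := Finset.mem_filter

lemma mem_posSide : p ∈ posSide P u v ↔ p ∈ P ∧ 0 < sideVal u v p := Finset.mem_filter

lemma posSide_swap (P : Finset (ℝ × ℝ)) (u v : ℝ × ℝ) : posSide P v u = negSide P u v := by
  ext p
  simp only [mem_posSide, mem_negSide, sideVal_swap u v, Left.neg_pos_iff]

lemma negSide_swap (P : Finset (ℝ × ℝ)) (u v : ℝ × ℝ) : negSide P v u = posSide P u v :=
  (posSide_swap P v u).symm

lemma notMem_posSide_swap (h : p ∈ posSide P u v) : p ∉ posSide P v u := by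
  rw [posSide_swap, mem_negSide, not_and]
  exact fun _ => (mem_posSide.1 h).2.not_gt

lemma GenPos.card_negSide_add_card_posSide (hgp : GenPos P) (hu : u ∈ P) (hv : v ∈ P)
    (huv : u ≠ v) : #(negSide P u v) + #(posSide P u v) + 2 = #P := by
  classical
  have hsides : Disjoint (negSide P u v) (posSide P u v) :=
    Finset.disjoint_left.2 fun x hn hp =>
      lt_asymm (mem_negSide.1 hn).2 (mem_posSide.1 hp).2
  have hunion : negSide P u v ∪ posSide P u v = P \ {u, v} := by
    ext x
    simp only [Finset.mem_union, mem_negSide, mem_posSide, ← and_or_left, ← ne_iff_lt_or_gt,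
      Finset.mem_sdiff, Finset.mem_insert, Finset.mem_singleton, not_or]
    refine and_congr_right fun hx => ⟨fun h => ⟨?_, ?_⟩, fun h => ?_⟩
    · rintro rfl; simp at h
    · rintro rfl; simp at h
    · exact hgp.sideVal_ne_zero hu hv hx huv (Ne.symm h.1) (Ne.symm h.2)
  have hpair : ({u, v} : Finset (ℝ × ℝ)) ⊆ P := by simp [Finset.insert_subset_iff, hu, hv]
  rw [← Finset.card_union_of_disjoint hsides, hunion, ← Finset.card_pair huv,
    Finset.card_sdiff_add_card_eq_card hpair]

lemma isHalving_iff : IsHalving P n u v ↔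
    u ∈ P ∧ v ∈ P ∧ u ≠ v ∧ #(negSide P u v) = n - 1 ∧ #(posSide P u v) = n - 1 := by
  simp only [IsHalving, IsKHalving]
  refine and_congr_right' (and_congr_right' (and_congr_right' ?_))
  omega

lemma IsHalving.symm (h : IsHalving P n u v) : IsHalving P n v u := by
  obtain ⟨hu, hv, huv, hneg, hpos⟩ := isHalving_iff.1 h
  exact isHalving_iff.2 ⟨hv, hu, huv.symm, by rwa [negSide_swap], by rwa [posSide_swap]⟩

lemma GenPos.isHalving_of_card_negSide (hgp : GenPos P) (hcard : #P = 2 * n) (hu : u ∈ P)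
    (hv : v ∈ P) (huv : u ≠ v) (h : #(negSide P u v) = n - 1) : IsHalving P n u v := by
  have := hgp.card_negSide_add_card_posSide hu hv huv
  exact isHalving_iff.2 ⟨hu, hv, huv, h, by omega⟩

end Sides

section Rotation

variable {P : Finset (ℝ × ℝ)} {u v p q q' : ℝ × ℝ} {k : ℕ}

/-- The points of `P` strictly to the right of the line through `p` parallel to `u v`, the
half-plane swept by the rotation argument. -/
noncomputable def rightOf (P : Finset (ℝ × ℝ)) (u v p : ℝ × ℝ) : Finset (ℝ × ℝ) :=
  {q ∈ P | sideVal u v q < sideVal u v p}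

lemma mem_rightOf : q ∈ rightOf P u v p ↔ q ∈ P ∧ sideVal u v q < sideVal u v p :=
  Finset.mem_filter

lemma ne_of_mem_rightOf (hq : q ∈ rightOf P u v p) : p ≠ q := by
  rintro rfl
  exact lt_irrefl _ (mem_rightOf.1 hq).2

-- The witness `κ` is minus the cotangent of the angle at `p` from the direction `u - v`.
lemma exists_angular_key (u v p : ℝ × ℝ) : ∃ κ : ℝ × ℝ → ℝ, ∀ x y,
    sideVal u v x < sideVal u v p → sideVal u v y < sideVal u v p →
      (κ x ≤ κ y ↔ 0 ≤ sideVal p x y) := by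
  refine ⟨fun x => ((v.1 - u.1) * (x.1 - p.1) + (v.2 - u.2) * (x.2 - p.2)) /
    (sideVal u v p - sideVal u v x), fun x y hx hy => ?_⟩
  have hpos : 0 < (v.1 - u.1) ^ 2 + (v.2 - u.2) ^ 2 := by
    by_contra hle
    have h1 : v.1 - u.1 = 0 := by nlinarith [sq_nonneg (v.1 - u.1), sq_nonneg (v.2 - u.2)]
    have h2 : v.2 - u.2 = 0 := by nlinarith [sq_nonneg (v.1 - u.1), sq_nonneg (v.2 - u.2)]
    simp [sideVal, h1, h2] at hx
  have hcross : ((v.1 - u.1) * (y.1 - p.1) + (v.2 - u.2) * (y.2 - p.2)) *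
        (sideVal u v p - sideVal u v x) -
      ((v.1 - u.1) * (x.1 - p.1) + (v.2 - u.2) * (x.2 - p.2)) *
        (sideVal u v p - sideVal u v y) =
      ((v.1 - u.1) ^ 2 + (v.2 - u.2) ^ 2) * sideVal p x y := by
    simp only [sideVal]; ring
  rw [div_le_div_iff₀ (sub_pos.2 hx) (sub_pos.2 hy), ← sub_nonneg, hcross,
    mul_nonneg_iff_of_pos_left hpos]

lemma card_negSide_of_first (hp : p ∈ P) (hfirst : ∀ x ∈ rightOf P u v p, 0 ≤ sideVal p q x) :
    #(negSide P p q) + #(rightOf P u v p) + 1 ≤ #P := by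
  classical
  have hdisj : Disjoint (negSide P p q) (rightOf P u v p) :=
    Finset.disjoint_right.2 fun x hx hneg => (hfirst x hx).not_gt (mem_negSide.1 hneg).2
  have hsub : negSide P p q ∪ rightOf P u v p ⊆ P.erase p := by
    intro x hx
    rcases Finset.mem_union.1 hx with h | h
    · refine Finset.mem_erase.2 ⟨?_, (mem_negSide.1 h).1⟩
      rintro rfl
      simp [mem_negSide] at h
    · exact Finset.mem_erase.2 ⟨(ne_of_mem_rightOf h).symm, (mem_rightOf.1 h).1⟩
  rw [← Finset.card_union_of_disjoint hdisj]
  exact (Nat.add_le_add_right (Finset.card_le_card hsub) 1).trans_eq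
    (Finset.card_erase_add_one hp)

lemma GenPos.card_negSide_of_last (hgp : GenPos P) (hp : p ∈ P) (hq : q ∈ rightOf P u v p)
    (hlast : ∀ x ∈ rightOf P u v p, sideVal p q x ≤ 0) :
    #(rightOf P u v p) ≤ #(negSide P p q) + 1 := by
  classical
  refine (Finset.card_le_card fun x hx => ?_).trans (Finset.card_insert_le q _)
  have hxP := (mem_rightOf.1 hx).1
  rw [Finset.mem_insert, mem_negSide, or_iff_not_imp_left]
  exact fun hxq => ⟨hxP, (hlast x hx).lt_of_ne <| hgp.sideVal_ne_zero hp (mem_rightOf.1 hq).1 hxP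
    (ne_of_mem_rightOf hq) (ne_of_mem_rightOf hx) (Ne.symm hxq)⟩

lemma sideVal_neg_of_notMem_rightOf {x : ℝ × ℝ} (hq : q ∈ rightOf P u v p)
    (hq' : q' ∈ rightOf P u v p) (hxP : x ∈ P) (hx : x ∉ rightOf P u v p)
    (hqq' : sideVal p q q' < 0) (hqx : sideVal p q x < 0) : sideVal p q' x < 0 := by
  have hxp : sideVal u v p ≤ sideVal u v x := by
    simpa only [mem_rightOf, hxP, true_and, not_lt] using hx
  have hplucker : (sideVal u v p - sideVal u v q) * sideVal p q' x =
      (sideVal u v p - sideVal u v q') * sideVal p q x +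
        (sideVal u v x - sideVal u v p) * sideVal p q q' := by
    simp only [sideVal]; ring
  have hneg : (sideVal u v p - sideVal u v q) * sideVal p q' x < 0 := by
    rw [hplucker]
    exact add_neg_of_neg_of_nonpos (mul_neg_of_pos_of_neg (sub_pos.2 (mem_rightOf.1 hq').2) hqx)
      (mul_nonpos_of_nonneg_of_nonpos (sub_nonneg.2 hxp) hqq'.le)
  exact (pos_iff_neg_of_mul_neg hneg).1 (sub_pos.2 (mem_rightOf.1 hq).2)

-- Rotating from `p q'` to the next line `p q`, only `q'` can enter the right side.
lemma GenPos.card_negSide_le_of_consecutive (hgp : GenPos P) (hp : p ∈ P)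
    (hq : q ∈ rightOf P u v p) (hq' : q' ∈ rightOf P u v p) (hqq' : sideVal p q q' < 0)
    (hnext : ∀ x ∈ rightOf P u v p, sideVal p q x < 0 → sideVal p q' x ≤ 0) :
    #(negSide P p q) ≤ #(negSide P p q') + 1 := by
  classical
  refine (Finset.card_le_card fun x hx => ?_).trans (Finset.card_insert_le q' _)
  obtain ⟨hxP, hqx⟩ := mem_negSide.1 hx
  rw [Finset.mem_insert, mem_negSide, or_iff_not_imp_left]
  refine fun hxq' => ⟨hxP, ?_⟩
  by_cases hxr : x ∈ rightOf P u v p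
  · exact (hnext x hxr hqx).lt_of_ne <| hgp.sideVal_ne_zero hp (mem_rightOf.1 hq').1 hxP
      (ne_of_mem_rightOf hq') (ne_of_mem_rightOf hxr) (Ne.symm hxq')
  · exact sideVal_neg_of_notMem_rightOf hq hq' hxP hxr hqq' hqx

theorem GenPos.exists_card_negSide_eq (hgp : GenPos P) (hp : p ∈ P)
    (hlt : k < #(rightOf P u v p)) (hle : #P ≤ #(rightOf P u v p) + k + 1) :
    ∃ q ∈ rightOf P u v p, #(negSide P p q) = k := by
  classical
  obtain ⟨κ, hκ⟩ := exists_angular_key u v p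
  replace hκ : ∀ x ∈ rightOf P u v p, ∀ y ∈ rightOf P u v p, (κ x ≤ κ y ↔ 0 ≤ sideVal p x y) :=
    fun x hx y hy => hκ x y (mem_rightOf.1 hx).2 (mem_rightOf.1 hy).2
  have hlarge : {q ∈ rightOf P u v p | k ≤ #(negSide P p q)}.Nonempty := by
    obtain ⟨q, hq, hmax⟩ := Finset.exists_max_image _ κ (Finset.card_pos.1 (by omega :
      0 < #(rightOf P u v p)))
    have hlast : ∀ x ∈ rightOf P u v p, sideVal p q x ≤ 0 := fun x hx => by
      rw [← neg_nonneg, ← sideVal_swap_right]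
      exact (hκ x hx q hq).1 (hmax x hx)
    have := hgp.card_negSide_of_last hp hq hlast
    exact ⟨q, Finset.mem_filter.2 ⟨hq, by omega⟩⟩
  obtain ⟨q, hq, hmin⟩ := Finset.exists_min_image _ κ hlarge
  obtain ⟨hq, hkq⟩ := Finset.mem_filter.1 hq
  refine ⟨q, hq, hkq.antisymm' (not_lt.1 fun hk => ?_)⟩
  have hearlier : {x ∈ rightOf P u v p | sideVal p q x < 0}.Nonempty := by
    by_contra hempty
    have hfirst : ∀ x ∈ rightOf P u v p, 0 ≤ sideVal p q x := by
      simpa only [Finset.not_nonempty_iff_eq_empty, Finset.filter_eq_empty_iff, not_lt]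
        using hempty
    have := card_negSide_of_first hp hfirst
    omega
  obtain ⟨q', hq', hmax⟩ := Finset.exists_max_image _ κ hearlier
  obtain ⟨hq', hqq'⟩ := Finset.mem_filter.1 hq'
  have hstep : #(negSide P p q) ≤ #(negSide P p q') + 1 :=
    hgp.card_negSide_le_of_consecutive hp hq hq' hqq' fun x hx hqx => by
      rw [← neg_nonneg, ← sideVal_swap_right]
      exact (hκ x hx q' hq').1 (hmax x (Finset.mem_filter.2 ⟨hx, hqx⟩))
  have hκq' : κ q ≤ κ q' := hmin q' (Finset.mem_filter.2 ⟨hq', by omega⟩)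
  exact hqq'.not_ge ((hκ q hq q' hq').1 hκq')

end Rotation

section Matching

variable {P : Finset (ℝ × ℝ)} {n : ℕ} {f : ℝ × ℝ → ℝ × ℝ} {a a' b : ℝ × ℝ}

/-- `f` sends each point of `P` to the other point on its unique halving line; the values of `f`
outside `P` are arbitrary. -/
structure IsHalvingMatching (P : Finset (ℝ × ℝ)) (n : ℕ) (f : ℝ × ℝ → ℝ × ℝ) : Prop where
  isHalving : ∀ p ∈ P, IsHalving P n p (f p)
  eq_of_isHalving : ∀ p ∈ P, ∀ q, IsHalving P n p q → q = f p

lemma exists_isHalvingMatching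
    (hone : ∀ p ∈ P, Set.ncard {q : ℝ × ℝ | q ∈ P ∧ IsHalving P n p q} = 1) :
    ∃ f, IsHalvingMatching P n f := by
  have hpartner : ∀ p ∈ P, ∃ q, IsHalving P n p q ∧ ∀ q', IsHalving P n p q' → q' = q := by
    intro p hp
    obtain ⟨q, hq⟩ := Set.ncard_eq_one.1 (hone p hp)
    have hiff (q' : ℝ × ℝ) : q' ∈ P ∧ IsHalving P n p q' ↔ q' = q := Set.ext_iff.1 hq q'
    exact ⟨q, ((hiff q).2 rfl).2, fun q' h => (hiff q').1 ⟨h.2.1, h⟩⟩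
  choose! f hf using hpartner
  exact ⟨f, fun p hp => (hf p hp).1, fun p hp => (hf p hp).2⟩

namespace IsHalvingMatching

lemma apply_mem (hf : IsHalvingMatching P n f) (ha : a ∈ P) : f a ∈ P := (hf.isHalving a ha).2.1

lemma ne_apply (hf : IsHalvingMatching P n f) (ha : a ∈ P) : a ≠ f a := (hf.isHalving a ha).2.2.1

lemma apply_apply (hf : IsHalvingMatching P n f) (ha : a ∈ P) : f (f a) = a :=
  (hf.eq_of_isHalving _ (hf.apply_mem ha) _ (hf.isHalving a ha).symm).symm

lemma sideVal_apply_lt (hf : IsHalvingMatching P n f) (hgp : GenPos P) (hcard : #P = 2 * n)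
    (haa' : IsHalving P n a a') (hb : b ∈ P) (hpos : 0 < sideVal a a' b) :
    sideVal a a' (f b) < sideVal a a' b := by
  classical
  have hsub : P \ posSide P a a' ⊆ rightOf P a a' b := fun x hx => by
    simp only [Finset.mem_sdiff, mem_posSide, not_and, not_lt] at hx
    exact mem_rightOf.2 ⟨hx.1, (hx.2 hx.1).trans_lt hpos⟩
  have hle := Finset.card_le_card hsub
  rw [Finset.card_sdiff_of_subset (show posSide P a a' ⊆ P from Finset.filter_subset _ _), hcard,
    (isHalving_iff.1 haa').2.2.2.2] at hle
  have hP : 0 < #P := Finset.card_pos.2 ⟨b, hb⟩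
  obtain ⟨q, hq, hcardq⟩ := hgp.exists_card_negSide_eq (u := a) (v := a') (k := n - 1) hb
    (by omega) (by omega)
  obtain ⟨hqP, hlt⟩ := mem_rightOf.1 hq
  have hbq := hgp.isHalving_of_card_negSide hcard hb hqP (ne_of_mem_rightOf hq) hcardq
  rwa [← hf.eq_of_isHalving b hb q hbq]

lemma lt_sideVal_apply (hf : IsHalvingMatching P n f) (hgp : GenPos P) (hcard : #P = 2 * n)
    (haa' : IsHalving P n a a') (hb : b ∈ P) (hneg : sideVal a a' b < 0) :
    sideVal a a' b < sideVal a a' (f b) := by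
  simpa only [sideVal_swap a a', neg_lt_neg_iff] using
    hf.sideVal_apply_lt hgp hcard haa'.symm hb (by rw [sideVal_swap]; exact neg_pos.2 hneg)

lemma sideVal_pos_iff (hf : IsHalvingMatching P n f) (hgp : GenPos P) (hcard : #P = 2 * n)
    (ha : a ∈ P) (hb : b ∈ P) (hab : a ≠ b) (hbfa : b ≠ f a) :
    0 < sideVal a (f a) b ↔ sideVal b (f b) a < 0 := by
  have hcross : sideVal a (f a) b - sideVal a (f a) (f b) =
      -(sideVal b (f b) a - sideVal b (f b) (f a)) := by
    simp only [sideVal]; ring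
  have hafb : f b ≠ a := fun h => hbfa (by rw [← h, hf.apply_apply hb])
  have hb0 := hgp.sideVal_ne_zero ha (hf.apply_mem ha) hb (hf.ne_apply ha) hab hbfa.symm
  have ha0 := hgp.sideVal_ne_zero hb (hf.apply_mem hb) ha (hf.ne_apply hb) hab.symm hafb
  constructor
  · intro hpos
    have := hf.sideVal_apply_lt hgp hcard (hf.isHalving a ha) hb hpos
    refine ha0.lt_or_gt.resolve_right fun h => ?_
    linarith [hf.sideVal_apply_lt hgp hcard (hf.isHalving b hb) ha h]
  · intro hneg
    have := hf.lt_sideVal_apply hgp hcard (hf.isHalving b hb) ha hneg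
    refine hb0.lt_or_gt.resolve_left fun h => ?_
    linarith [hf.lt_sideVal_apply hgp hcard (hf.isHalving a ha) hb h]

end IsHalvingMatching

end Matching

section Segments

variable {u v x y y' : ℝ × ℝ}

lemma disjoint_openSegment_of_sideVal_ne_zero (h : sideVal x y y' ≠ 0) :
    Disjoint (openSegment ℝ x y) (openSegment ℝ x y') := by
  refine Set.disjoint_left.2 ?_
  rintro _ ⟨s, t, -, -, hst, rfl⟩ ⟨s', t', -, ht', hst', heq⟩
  have hside := congrArg (sideVal x y) heq
  simp only [sideVal_add_smul _ _ _ _ hst, sideVal_add_smul _ _ _ _ hst', sideVal_left,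
    sideVal_right, mul_zero, zero_add, mul_eq_zero] at hside
  exact hside.elim ht'.ne' h

lemma disjoint_openSegment_of_opposite_sides (hy : 0 ≤ sideVal u v y) (hy' : sideVal u v y' ≤ 0)
    (hlt : sideVal u v y' < sideVal u v y) :
    Disjoint (openSegment ℝ u y) (openSegment ℝ v y') := by
  refine Set.disjoint_left.2 ?_
  rintro _ ⟨s, t, -, ht, hst, rfl⟩ ⟨s', t', -, ht', hst', heq⟩
  have hside := congrArg (sideVal u v) heq
  simp only [sideVal_add_smul _ _ _ _ hst, sideVal_add_smul _ _ _ _ hst', sideVal_left,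
    sideVal_right, mul_zero, zero_add] at hside
  rcases hy.eq_or_lt with h0 | hpos
  · exact (mul_neg_of_pos_of_neg ht' (hlt.trans_eq h0.symm)).ne (by rw [hside, ← h0, mul_zero])
  · exact ((mul_nonpos_of_nonneg_of_nonpos ht'.le hy').trans_lt (mul_pos ht hpos)).ne hside

lemma nonCrossingG_fromRel {r : ℝ × ℝ → ℝ × ℝ → Prop}
    (hr : ∀ a b c d, r a b → r c d → a ≠ b → c ≠ d → s(a, b) ≠ s(c, d) →
      Disjoint (openSegment ℝ a b) (openSegment ℝ c d)) :
    NonCrossingG (SimpleGraph.fromRel r) := by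
  rintro a b c d ⟨hab, hab'⟩ ⟨hcd, hcd'⟩ hne
  rcases hab' with h | h <;> rcases hcd' with h' | h'
  · exact hr _ _ _ _ h h' hab hcd hne
  · rw [openSegment_symm ℝ c d]
    exact hr _ _ _ _ h h' hab hcd.symm (by rwa [Sym2.eq_swap (a := d)])
  · rw [openSegment_symm ℝ a b]
    exact hr _ _ _ _ h h' hab.symm hcd (by rwa [Sym2.eq_swap (a := b)])
  · rw [openSegment_symm ℝ a b, openSegment_symm ℝ c d]
    exact hr _ _ _ _ h h' hab.symm hcd.symm
      (by rwa [Sym2.eq_swap (a := b), Sym2.eq_swap (a := d)])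

end Segments

section Involution

variable {α : Type*} {f : α → α} {a x : α}

lemma mk_apply_eq_iff_mem (ha : f (f a) = a) : s(x, f x) = s(a, f a) ↔ x ∈ s(a, f a) := by
  refine ⟨fun h => h ▸ Sym2.mem_mk_left x (f x), fun h => ?_⟩
  rcases Sym2.mem_iff.1 h with rfl | rfl
  · rfl
  · rw [ha, Sym2.eq_swap]

lemma card_image_mk_of_involution [DecidableEq α] {S : Finset α} (hmem : ∀ x ∈ S, f x ∈ S)
    (hne : ∀ x ∈ S, x ≠ f x) (hff : ∀ x ∈ S, f (f x) = x) :
    #S = 2 * #(S.image fun x => s(x, f x)) := by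
  have hfiber : ∀ e ∈ S.image fun x => s(x, f x), #{x ∈ S | s(x, f x) = e} = 2 := by
    intro e he
    obtain ⟨a, ha, rfl⟩ := Finset.mem_image.1 he
    have hpair : {x ∈ S | s(x, f x) = s(a, f a)} = {a, f a} := by
      ext x
      rw [Finset.mem_filter, mk_apply_eq_iff_mem (hff a ha), Sym2.mem_iff, Finset.mem_insert,
        Finset.mem_singleton, and_iff_right_iff_imp]
      rintro (rfl | rfl)
      exacts [ha, hmem a ha]
    rw [hpair, Finset.card_pair (hne a ha)]
  rw [Finset.card_eq_sum_card_image (fun x => s(x, f x)), Finset.sum_const_nat hfiber, mul_comm]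

lemma exists_transversal_of_involution {S : Finset α} {n : ℕ} (hmem : ∀ x ∈ S, f x ∈ S)
    (hne : ∀ x ∈ S, x ≠ f x) (hff : ∀ x ∈ S, f (f x) = x) (hcard : #S = 2 * n) :
    ∃ v : Fin n → α, (∀ i, v i ∈ S) ∧ ∀ x ∈ S, ∃! i, x ∈ s(v i, f (v i)) := by
  classical
  have hpairs : #(S.image fun x => s(x, f x)) = n := by
    have := card_image_mk_of_involution hmem hne hff
    omega
  let e := (Finset.equivFinOfCardEq hpairs).symm
  choose v hvS hv using fun i => Finset.mem_image.1 (e i).2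
  refine ⟨v, hvS, fun x hx => ?_⟩
  have hiff (i : Fin n) :
      x ∈ s(v i, f (v i)) ↔ e i = ⟨s(x, f x), Finset.mem_image_of_mem _ hx⟩ := by
    rw [← mk_apply_eq_iff_mem (hff _ (hvS i)), hv, Subtype.ext_iff, eq_comm]
  simpa only [hiff] using e.bijective.existsUnique _

end Involution

section HalvingStar

variable {P : Finset (ℝ × ℝ)} {n : ℕ} {f : ℝ × ℝ → ℝ × ℝ} {a b x y : ℝ × ℝ}

/-- `x y` is an edge of the star centred at `x`: `y` is `f x` or lies to the left of the directed
line from `x` to `f x`. -/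
def IsSpoke (P : Finset (ℝ × ℝ)) (f : ℝ × ℝ → ℝ × ℝ) (x y : ℝ × ℝ) : Prop :=
  y = f x ∨ y ∈ posSide P x (f x)

lemma IsSpoke.sideVal_nonneg (h : IsSpoke P f x y) : 0 ≤ sideVal x (f x) y := by
  rcases h with rfl | h
  · rw [sideVal_right]
  · exact (mem_posSide.1 h).2.le

lemma IsSpoke.sideVal_pos (h : IsSpoke P f x y) (hy : y ≠ f x) : 0 < sideVal x (f x) y :=
  (mem_posSide.1 (h.resolve_left hy)).2

/-- The double star with central edge `a (f a)`: the union of the stars centred at `a` and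
at `f a`. -/
def halvingStar (P : Finset (ℝ × ℝ)) (f : ℝ × ℝ → ℝ × ℝ) (a : ℝ × ℝ) : SimpleGraph (ℝ × ℝ) :=
  SimpleGraph.fromRel fun x y => x ∈ s(a, f a) ∧ IsSpoke P f x y

lemma halvingStar_adj : (halvingStar P f a).Adj x y ↔
    x ≠ y ∧ (x ∈ s(a, f a) ∧ IsSpoke P f x y ∨ y ∈ s(a, f a) ∧ IsSpoke P f y x) :=
  SimpleGraph.fromRel_adj _ x y

lemma halvingStar_adj_iff_of_mem_of_notMem (hx : x ∈ s(a, f a)) (hy : y ∉ s(a, f a))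
    (hyfx : y ≠ f x) : (halvingStar P f a).Adj x y ↔ y ∈ posSide P x (f x) := by
  have hxy : x ≠ y := fun h => hy (h ▸ hx)
  simp [halvingStar_adj, IsSpoke, hxy, hx, hy, hyfx]

lemma not_halvingStar_adj_of_notMem (hx : x ∉ s(a, f a)) (hy : y ∉ s(a, f a)) :
    ¬ (halvingStar P f a).Adj x y := by
  simp [halvingStar_adj, hx, hy]

namespace IsHalvingMatching

lemma mem_of_mem_mk (hf : IsHalvingMatching P n f) (ha : a ∈ P) (hx : x ∈ s(a, f a)) : x ∈ P := by
  rcases Sym2.mem_iff.1 hx with rfl | rfl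
  exacts [ha, hf.apply_mem ha]

lemma mem_of_isSpoke (hf : IsHalvingMatching P n f) (hx : x ∈ P) (h : IsSpoke P f x y) :
    y ∈ P := by
  rcases h with rfl | h
  exacts [hf.apply_mem hx, (mem_posSide.1 h).1]

lemma isSpoke_or_isSpoke (hf : IsHalvingMatching P n f) (hgp : GenPos P) (hcard : #P = 2 * n)
    (ha : a ∈ P) (hb : b ∈ P) (hab : a ≠ b) : IsSpoke P f a b ∨ IsSpoke P f b a := by
  by_cases hbfa : b = f a
  · exact Or.inl (Or.inl hbfa)
  have hafb : a ≠ f b := fun h => hbfa (by rw [h, hf.apply_apply hb])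
  rcases (hgp.sideVal_ne_zero ha (hf.apply_mem ha) hb (hf.ne_apply ha) hab
    (Ne.symm hbfa)).lt_or_gt with h | h
  · exact Or.inr (Or.inr (mem_posSide.2
      ⟨ha, (hf.sideVal_pos_iff hgp hcard hb ha hab.symm hafb).2 h⟩))
  · exact Or.inl (Or.inr (mem_posSide.2 ⟨hb, h⟩))

lemma eq_apply_of_isSpoke_of_isSpoke (hf : IsHalvingMatching P n f) (hgp : GenPos P)
    (hcard : #P = 2 * n) (ha : a ∈ P) (hb : b ∈ P) (hab : a ≠ b) (hspoke : IsSpoke P f a b)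
    (hspoke' : IsSpoke P f b a) : b = f a := by
  by_contra hbfa
  exact hspoke'.sideVal_nonneg.not_gt
    ((hf.sideVal_pos_iff hgp hcard ha hb hab hbfa).1 (hspoke.sideVal_pos hbfa))

lemma notMem_mk_of_mem_posSide (hf : IsHalvingMatching P n f) (ha : a ∈ P) (hx : x ∈ s(a, f a))
    (hy : y ∈ posSide P x (f x)) : y ∉ s(a, f a) := by
  have hpos := (mem_posSide.1 hy).2
  rw [← (mk_apply_eq_iff_mem (hf.apply_apply ha)).2 hx, Sym2.mem_iff]
  rintro (rfl | rfl)
  · exact hpos.ne' (sideVal_left y (f y))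
  · exact hpos.ne' (sideVal_right x (f x))

lemma nonempty_doubleStar_iso_halvingStar (hf : IsHalvingMatching P n f) (hcard : #P = 2 * n)
    (ha : a ∈ P) :
    Nonempty (doubleStar (Fin (n - 1)) ≃g (halvingStar P f a).induce (P : Set (ℝ × ℝ))) := by
  let c : Bool → P := fun b => cond b ⟨a, ha⟩ ⟨f a, hf.apply_mem ha⟩
  have hfc (b : Bool) : f (c b) = c !b := by
    cases b
    exacts [hf.apply_apply ha, rfl]
  have hc (b : Bool) : (c b : ℝ × ℝ) ∈ s(a, f a) := by cases b <;> simp [c]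
  have hside (b : Bool) : #(posSide P (c b) (f (c b))) = n - 1 :=
    (isHalving_iff.1 (hf.isHalving _ (c b).2)).2.2.2.2
  let e (b : Bool) := (Finset.equivFinOfCardEq (hside b)).symm
  let leaf (b : Bool) (i : Fin (n - 1)) : P := ⟨e b i, (mem_posSide.1 (e b i).2).1⟩
  have hleaf_notMem (b : Bool) (i : Fin (n - 1)) : (leaf b i : ℝ × ℝ) ∉ s(a, f a) :=
    hf.notMem_mk_of_mem_posSide ha (hc b) (e b i).2
  have hcl (b d : Bool) (i : Fin (n - 1)) : c b ≠ leaf d i :=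
    fun h => hleaf_notMem d i (h ▸ hc b)
  have hleaf_iff (b d : Bool) (i : Fin (n - 1)) :
      (leaf d i : ℝ × ℝ) ∈ posSide P (c b) (f (c b)) ↔ b = d := by
    refine ⟨fun h => ?_, fun h => h ▸ (e b i).2⟩
    by_contra hbd
    obtain rfl : d = !b := Bool.eq_not.2 (Ne.symm hbd)
    have hopp : (leaf (!b) i : ℝ × ℝ) ∈ posSide P (c !b) (f (c !b)) := (e (!b) i).2
    rw [hfc, Bool.not_not] at hopp
    rw [hfc] at h
    exact notMem_posSide_swap h hopp
  have hbij : Function.Bijective (doubleStarMap c leaf) := by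
    refine doubleStarMap_bijective (fun h => hf.ne_apply ha (congrArg Subtype.val h).symm)
      (fun b i j h => (e b).injective (Subtype.ext (congrArg (fun x : P => x.1) h)))
      (fun i j h => ?_) hcl ?_
    · exact Bool.false_ne_true ((hleaf_iff false true j).1 (h ▸ (e false i).2))
    · have hP : 0 < #P := Finset.card_pos.2 ⟨a, ha⟩
      rw [Fintype.card_coe, Fintype.card_fin]
      omega
  refine nonempty_doubleStar_iso hbij ?_ (fun b d i => ?_)
    fun b d i j => not_halvingStar_adj_of_notMem (hleaf_notMem b i) (hleaf_notMem d j)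
  · exact halvingStar_adj.2 ⟨(hf.ne_apply ha).symm, Or.inr ⟨hc true, Or.inl rfl⟩⟩
  · refine (halvingStar_adj_iff_of_mem_of_notMem (hc b) (hleaf_notMem d i) fun h => ?_).trans
      (hleaf_iff b d i)
    exact hcl (!b) d i (Subtype.ext (by rw [h, hfc]))

lemma nonCrossingG_halvingStar (hf : IsHalvingMatching P n f) (hgp : GenPos P) (ha : a ∈ P) :
    NonCrossingG (halvingStar P f a) := by
  refine nonCrossingG_fromRel ?_
  rintro x y x' y' ⟨hx, hxy⟩ ⟨hx', hxy'⟩ hne hne' hedge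
  have hxP := hf.mem_of_mem_mk ha hx
  rw [← (mk_apply_eq_iff_mem (hf.apply_apply ha)).2 hx] at hx'
  rcases Sym2.mem_iff.1 hx' with rfl | rfl
  · exact disjoint_openSegment_of_sideVal_ne_zero <| hgp.sideVal_ne_zero hxP
      (hf.mem_of_isSpoke hxP hxy) (hf.mem_of_isSpoke hxP hxy') hne hne' fun h => hedge (h ▸ rfl)
  · have hy' : sideVal x (f x) y' ≤ 0 := by
      simpa only [hf.apply_apply hxP, sideVal_swap x (f x), neg_nonneg] using hxy'.sideVal_nonneg
    refine disjoint_openSegment_of_opposite_sides hxy.sideVal_nonneg hy' ?_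
    by_cases hy : y = f x
    · have hy'x : y' ≠ f (f x) := fun h => hedge (by
        rw [hy, h, hf.apply_apply hxP, Sym2.eq_swap])
      have hpos := hxy'.sideVal_pos hy'x
      rw [hf.apply_apply hxP, sideVal_swap, neg_pos] at hpos
      exact hpos.trans_le hxy.sideVal_nonneg
    · exact hy'.trans_lt (hxy.sideVal_pos hy)

lemma planeSpanningTreeOn_halvingStar (hf : IsHalvingMatching P n f) (hgp : GenPos P)
    (hcard : #P = 2 * n) (ha : a ∈ P) : PlaneSpanningTreeOn P (halvingStar P f a) := by
  obtain ⟨e⟩ := hf.nonempty_doubleStar_iso_halvingStar hcard ha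
  refine ⟨fun x y hxy => ?_, e.isTree_iff.1 doubleStar_isTree, hf.nonCrossingG_halvingStar hgp ha⟩
  rcases (halvingStar_adj.1 hxy).2 with ⟨hx, h⟩ | ⟨hy, h⟩
  · have hxP := hf.mem_of_mem_mk ha hx
    exact ⟨hxP, hf.mem_of_isSpoke hxP h⟩
  · have hyP := hf.mem_of_mem_mk ha hy
    exact ⟨hf.mem_of_isSpoke hyP h, hyP⟩

lemma isGeomPartition_halvingStar (hf : IsHalvingMatching P n f) (hgp : GenPos P)
    (hcard : #P = 2 * n) {v : Fin n → ℝ × ℝ} (hvP : ∀ i, v i ∈ P)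
    (hv : ∀ p ∈ P, ∃! i, p ∈ s(v i, f (v i))) :
    IsGeomPartition P fun i => halvingStar P f (v i) := by
  intro a b ha hb hab
  wlog hspoke : IsSpoke P f a b generalizing a b
  · simpa only [SimpleGraph.adj_comm] using this b a hb ha hab.symm
      ((hf.isSpoke_or_isSpoke hgp hcard ha hb hab).resolve_left hspoke)
  obtain ⟨i, hi, huniq⟩ := hv a ha
  refine ⟨i, halvingStar_adj.2 ⟨hab, Or.inl ⟨hi, hspoke⟩⟩, fun j hj => huniq j ?_⟩
  rcases (halvingStar_adj.1 hj).2 with ⟨haj, -⟩ | ⟨hbj, hspoke'⟩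
  · exact haj
  · obtain rfl := hf.eq_apply_of_isSpoke_of_isSpoke hgp hcard ha hb hab hspoke hspoke'
    rw [← (mk_apply_eq_iff_mem (hf.apply_apply (hvP j))).2 hbj, hf.apply_apply ha]
    exact Sym2.mem_mk_right _ _

end IsHalvingMatching

end HalvingStar

end Halving

open Halving GraphDefs in
theorem stmt14_general (P : Finset (ℝ × ℝ)) (n : ℕ) (hgp : GenPos P) (hcard : P.card = 2 * n)
    (hone : ∀ p ∈ P, Set.ncard {q : ℝ × ℝ | q ∈ P ∧ IsHalving P n p q} = 1) :
    ∃ 𝒯 : Fin n → SimpleGraph (ℝ × ℝ),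
      IsGeomPartition P 𝒯 ∧
      (∀ i, PlaneSpanningTreeOn P (𝒯 i) ∧
        IsDoubleStar ((𝒯 i).induce (↑P : Set (ℝ × ℝ))) ∧
        IsSymmetricTree ((𝒯 i).induce (↑P : Set (ℝ × ℝ)))) ∧
      ∀ i j : Fin n,
        Nonempty (((𝒯 i).induce (↑P : Set (ℝ × ℝ))) ≃g
          ((𝒯 j).induce (↑P : Set (ℝ × ℝ)))) := by
  obtain ⟨f, hf⟩ := exists_isHalvingMatching hone
  obtain ⟨v, hvP, hv⟩ := exists_transversal_of_involution (fun _ => hf.apply_mem)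
    (fun _ => hf.ne_apply) (fun _ => hf.apply_apply) hcard
  let e (i : Fin n) := (hf.nonempty_doubleStar_iso_halvingStar hcard (hvP i)).some
  exact ⟨fun i => halvingStar P f (v i), hf.isGeomPartition_halvingStar hgp hcard hvP hv,
    fun i => ⟨hf.planeSpanningTreeOn_halvingStar hgp hcard (hvP i),
      isDoubleStar_doubleStar.of_iso (e i), isSymmetricTree_of_doubleStar_iso (e i)⟩,
    fun i j => ⟨(e i).symm.trans (e j)⟩⟩

open Halving GraphDefs in
/-- If each point of a `2n`-point set `P` in general position lies on exactly one halving
line and exactly two `k`-halving lines for each `k = 1, …, r`, then the complete geometric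
graph on `P` can be partitioned into `n` plane spanning symmetric caterpillars that are
pairwise isomorphic. -/
theorem stmt14 (P : Finset (ℝ × ℝ)) (n r : ℕ) (hn : 2 ≤ n) (hr1 : 1 ≤ r) (hr2 : r ≤ n - 1)
    (hgp : GenPos P) (hcard : P.card = 2*n)
    (hone : ∀ p ∈ P, Set.ncard {q : ℝ × ℝ | q ∈ P ∧ IsHalving P n p q} = 1)
    (htwo : ∀ k : ℕ, 1 ≤ k → k ≤ r →
      ∀ p ∈ P, Set.ncard {q : ℝ × ℝ | q ∈ P ∧ IsKHalving P n k p q} = 2) :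
    ∃ 𝒯 : Fin n → SimpleGraph (ℝ × ℝ),
      IsGeomPartition P 𝒯 ∧
      (∀ i, PlaneSpanningTreeOn P (𝒯 i) ∧
        IsCaterpillar ((𝒯 i).induce (↑P : Set (ℝ × ℝ))) ∧
        IsSymmetricTree ((𝒯 i).induce (↑P : Set (ℝ × ℝ)))) ∧
      ∀ i j : Fin n,
        Nonempty (((𝒯 i).induce (↑P : Set (ℝ × ℝ))) ≃g ((𝒯 j).induce (↑P : Set (ℝ × ℝ)))) := by
  obtain ⟨𝒯, hpart, htrees, hiso⟩ := stmt14_general P n hgp hcard hone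
  exact ⟨𝒯, hpart, fun i => ⟨(htrees i).1, (htrees i).2.1.isCaterpillar, (htrees i).2.2⟩, hiso⟩
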